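/- On the event E, under Condition (H), for every iteration t ≤ T, every filter r ∈ [m], and every noise patch (i,j) with i ∈ [N], j ≠ s(X_i), the noise coefficient is uniformly bounded: ρ_{i,j,r}^{(t)} ≤ 10·(log T)^{1/3}/(σ_n² d). -/

import Mathlib

open Finset MeasureTheory ProbabilityTheory
open scoped ENNReal NNReal

noncomputable section

namespace AD

/-- Cubic ReLU activation. -/
def phi (z : ℝ) : ℝ := (max 0 z) ^ 3

/-- Negative sigmoid `ψ(z) = 1/(1+e^z)`. -/
def psi (z : ℝ) : ℝ := 1 / (1 + Real.exp z)

/-- Logistic loss `ℓ(z) = log(1+e^{-z})`. -/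
def lloss (z : ℝ) : ℝ := Real.log (1 + Real.exp (-z))

/-- Logistic sigmoid `σ(z) = 1/(1+e^{-z})`. -/
def sigm (z : ℝ) : ℝ := 1 / (1 + Real.exp (-z))

/-- Euclidean inner product on `Fin d → ℝ`. -/
def dot {d : ℕ} (a b : Fin d → ℝ) : ℝ := ∑ k, a k * b k

/-- Squared Euclidean norm. -/
def sqnorm {d : ℕ} (a : Fin d → ℝ) : ℝ := dot a a

/-- First standard basis vector `e₁` (the learnable feature `u`). -/
def e1 (d : ℕ) (hd : 0 < d) : Fin d → ℝ := fun k => if k = (⟨0, hd⟩ : Fin d) then 1 else 0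

/-- Last standard basis vector `e_d` (the unlearnable feature `v`). -/
def eLast (d : ℕ) (_hd : 0 < d) : Fin d → ℝ := fun k => if (k : ℕ) = d - 1 then 1 else 0

/-- The two-layer student network
`f_W(X) = ∑_r ∑_p [φ(⟨w_r,x_p⟩) − φ(−⟨w_r,x_p⟩)]`. -/
def netOut {m P d : ℕ} (w : Fin m → Fin d → ℝ) (X : Fin P → Fin d → ℝ) : ℝ :=
  ∑ r, ∑ p, (phi (dot (w r) (X p)) - phi (-(dot (w r) (X p))))

/-- The concentration event `E` of the paper, i.e. properties (P1)–(P8), stated for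
training patches `x`, initialization `w0`, labels `y` and signal-patch indices `sig`. -/
def EventEOn (N m P d : ℕ) (hd : 0 < d) (sigman sigma0 delta : ℝ)
    (y : Fin N → ℝ) (sig : Fin N → Fin P)
    (x : Fin N → Fin P → Fin d → ℝ) (w0 : Fin m → Fin d → ℝ) : Prop :=
  -- (P1) noise-patch norms
  (∀ i j, j ≠ sig i →
      sigman ^ 2 * d / 2 ≤ sqnorm (x i j) ∧ sqnorm (x i j) ≤ 3 * sigman ^ 2 * d / 2) ∧
  -- (P2) pairwise noise inner products
  (∀ i k j q, j ≠ sig i → q ≠ sig k → ((i, j) : Fin N × Fin P) ≠ (k, q) →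
      |dot (x i j) (x k q)| ≤
        2 * sigman ^ 2 * Real.sqrt ((d : ℝ) * Real.log ((16 : ℝ) * N ^ 2 * P ^ 2 / delta))) ∧
  -- (P3) sup-norm of noise patches
  (∀ i j, j ≠ sig i → ∀ kk : Fin d,
      |x i j kk| ≤ sigman * Real.sqrt (2 * Real.log ((16 : ℝ) * d * N * P / delta))) ∧
  -- (P4) initialization norms
  (∀ r, Real.sqrt (sqnorm (w0 r)) ≤ 2 * sigma0 * Real.sqrt d) ∧
  -- (P5) initialization signal correlation
  (∀ r, |dot (w0 r) (e1 d hd)| ≤ sigma0 * Real.sqrt (2 * Real.log ((16 : ℝ) * m / delta))) ∧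
  -- (P6) initialization noise correlations
  (∀ r i j, j ≠ sig i →
      |dot (w0 r) (x i j)| ≤
        2 * sigma0 * sigman * Real.sqrt ((d : ℝ) * Real.log ((16 : ℝ) * N * m * P / delta))) ∧
  -- (P7) maximal initial signal alignment
  (∃ r, sigma0 / 2 ≤ dot (w0 r) (e1 d hd)) ∧
  -- (P8) maximal initial noise alignment
  (∀ i j, j ≠ sig i → ∃ r, sigma0 * sigman * Real.sqrt d / 4 ≤ y i * dot (w0 r) (x i j))
structure Setting where
  N : ℕ
  m : ℕ
  P : ℕ
  d : ℕ
  T : ℕ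
  hN : 0 < N
  hm : 0 < m
  hP : 0 < P
  hd : 0 < d
  alpha : ℝ
  sigman : ℝ
  sigma0 : ℝ
  eta : ℝ
  eps : ℝ
  delta : ℝ
  halpha : 0 < alpha
  hsigman : 0 < sigman
  hsigma0 : 0 < sigma0
  heta : 0 < eta
  heps : 0 < eps
  hepsalpha : eps < alpha
  hdelta0 : 0 < delta
  hdelta1 : delta < 1
  /-- labels -/
  y : Fin N → ℝ
  hy : ∀ i, y i = 1 ∨ y i = -1
  /-- signal patch index -/
  sig : Fin N → Fin P
  /-- learnable samples -/
  SL : Finset (Fin N)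
  /-- unlearnable samples -/
  SU : Finset (Fin N)
  hunion : SL ∪ SU = Finset.univ
  hdisj : Disjoint SL SU
  /-- training patches -/
  x : Fin N → Fin P → Fin d → ℝ
  hsigL : ∀ i ∈ SL, x i (sig i) = (alpha * y i) • e1 d hd
  hsigU : ∀ i ∈ SU, x i (sig i) = (alpha * y i) • eLast d hd
  hnoiseU : ∀ i j, j ≠ sig i → dot (x i j) (e1 d hd) = 0
  hnoiseV : ∀ i j, j ≠ sig i → dot (x i j) (eLast d hd) = 0
  /-- weight trajectory -/
  w : ℕ → Fin m → Fin d → ℝ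
  hwperp : ∀ t r, dot (w t r) (eLast d hd) = 0
  /-- adversarial training examples at each iteration -/
  xadv : ℕ → Fin N → Fin P → Fin d → ℝ
  hadvnoise : ∀ t i j, j ≠ sig i → xadv t i j = x i j
  hadvspan : ∀ t i, ∃ c : ℝ, xadv t i (sig i) - x i (sig i) = c • x i (sig i)
  hadvlinf : ∀ t i p k, |xadv t i p k - x i p k| ≤ eps
  hadvlearn : ∀ t : ℕ, ∀ i ∈ SL,
    alpha - eps ≤ y i * dot (xadv t i (sig i)) (e1 d hd) ∧
      y i * dot (xadv t i (sig i)) (e1 d hd) ≤ alpha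

namespace Setting

variable (S : Setting)

/-- Adversarial margin `y_i f_{W^{(t)}}(X̃_i^{(t)})`. -/
def marg (t : ℕ) (i : Fin S.N) : ℝ := S.y i * netOut (S.w t) (S.xadv t i)

/-- Signal coordinate `w_{r,1}^{(t)}`. -/
def wsig (t : ℕ) (r : Fin S.m) : ℝ := S.w t r ⟨0, S.hd⟩

/-- Unlearnable fraction `p_un = |S_U|/N`. -/
def pun : ℝ := (S.SU.card : ℝ) / S.N

/-- The adversarial-training gradient-descent dynamics. -/
def ATDyn : Prop :=
  ∀ t r, S.w (t + 1) r = S.w t r +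
    (3 * S.eta / S.N) •
      ∑ i : Fin S.N, (psi (S.marg t i) * S.y i) •
        ∑ p : Fin S.P, (dot (S.w t r) (S.xadv t i p)) ^ 2 • S.xadv t i p

/-- The signed gradient weight of sample `i` at iteration `t` under adversarial
distillation from teacher logits `fT`. -/
def gAD (fT : Fin S.N → ℝ) (t : ℕ) (i : Fin S.N) : ℝ :=
  sigm (S.y i * fT i) * psi (S.marg t i) - sigm (-(S.y i * fT i)) * psi (-(S.marg t i))

/-- The adversarial-distillation gradient-descent dynamics. -/
def ADDyn (fT : Fin S.N → ℝ) : Prop :=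
  ∀ t r, S.w (t + 1) r = S.w t r +
    (3 * S.eta / S.N) •
      ∑ i : Fin S.N, (S.gAD fT t i * S.y i) •
        ∑ p : Fin S.P, (dot (S.w t r) (S.xadv t i p)) ^ 2 • S.xadv t i p

/-- Noise coefficients `ρ_{i,j,r}^{(t)}` (adversarial training). -/
def rho (i : Fin S.N) (j : Fin S.P) (r : Fin S.m) : ℕ → ℝ
  | 0 => 0
  | t + 1 => rho i j r t + (3 * S.eta / S.N) * psi (S.marg t i) * (dot (S.w t r) (S.x i j)) ^ 2

/-- Noise coefficients under adversarial distillation. -/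
def rhoAD (fT : Fin S.N → ℝ) (i : Fin S.N) (j : Fin S.P) (r : Fin S.m) : ℕ → ℝ
  | 0 => 0
  | t + 1 => rhoAD fT i j r t + (3 * S.eta / S.N) * S.gAD fT t i * (dot (S.w t r) (S.x i j)) ^ 2

/-- The event `E` for a setting. -/
def EventE : Prop :=
  EventEOn S.N S.m S.P S.d S.hd S.sigman S.sigma0 S.delta S.y S.sig S.x (S.w 0)

/-- Condition (H): the parameter requirements of Condition 4.1 of the paper
(without the unlearnable-fraction regime item, which is imposed separately). -/
def CondH (C : ℝ) : Prop :=
  1 ≤ C ∧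
  -- training horizon
  C * S.N / (S.eta * S.sigma0 * S.sigman ^ 3 * ((S.d : ℝ) * Real.sqrt S.d)) ≤ (S.T : ℝ) ∧
  -- dimension
  C * S.m ^ 2 * S.P ^ 2 * S.N ^ 2 *
      (Real.log ((S.T : ℝ) * S.N * S.m * S.P / S.delta)) ^ 4 ≤ (S.d : ℝ) ∧
  -- signal strength
  C * S.sigman * Real.sqrt S.d * Real.log ((S.T : ℝ) * S.N * S.m * S.P / S.delta) /
      (((S.N : ℝ) * (1 - S.pun)) ^ ((1 : ℝ) / 3)) ≤ S.alpha ∧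
  -- initialization scale
  S.sigma0 ≤
    C⁻¹ *
        min (min (1 / ((S.m : ℝ) ^ ((2 : ℝ) / 3) * (S.P : ℝ) ^ ((2 : ℝ) / 3) *
            S.sigman * Real.sqrt S.d))
          (1 / (S.alpha * (S.m : ℝ) ^ ((2 : ℝ) / 3))))
          (1 / (S.sigman * S.m ^ 2 * Real.sqrt S.P * S.d)) /
      Real.log ((S.T : ℝ) * S.d * S.N * S.m * S.P / S.delta) ∧
  -- learning rate
  S.eta ≤
    C⁻¹ * min (min (1 / (S.alpha ^ 3 * S.sigma0)) (1 / (S.sigman ^ 2 * S.d))) (1 / S.alpha ^ 2) /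
      Real.log ((S.T : ℝ) * S.N * S.m * S.P / S.delta) ∧
  -- adversarial budget
  C * S.sigman * S.m * Real.sqrt S.P * Real.log ((S.T : ℝ) * S.d * S.N * S.P / S.delta) ≤ S.eps ∧
  S.eps < C⁻¹ * min S.alpha (1 / (S.m * S.sigma0 * S.d)) ∧
  -- width and number of patches
  C * Real.log ((S.N : ℝ) * S.P / S.delta) ≤ (S.m : ℝ) ∧
  (S.m : ℝ) ≤ C * Real.log S.d ^ C ∧
  2 ≤ S.P ∧ (S.P : ℝ) ≤ C

/-- The sparse-unlearnable regime of Condition 4.1. -/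
def SparseRegime (C : ℝ) : Prop :=
  C / S.N ≤ S.pun ∧ S.pun ≤ C⁻¹ * Real.log S.d / S.N ∧
  C * S.m * S.P * Real.log ((S.T : ℝ) * S.d * S.N * S.m * S.P / S.delta) ≤ (S.N : ℝ)

/-- The noise-stability bound (NS) on learnable samples at iteration `t`. -/
def NS (t : ℕ) : Prop :=
  ∀ r : Fin S.m, ∀ i ∈ S.SL, ∀ j, j ≠ S.sig i →
    |dot (S.w t r) (S.x i j)| ≤
      3 * S.sigma0 * S.sigman *
          Real.sqrt ((S.d : ℝ) * Real.log ((16 : ℝ) * S.N * S.m * S.P / S.delta)) +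
        21 * S.pun * S.N * S.P * Real.log S.T ^ ((1 : ℝ) / 3) / Real.sqrt S.d *
          Real.sqrt (Real.log ((16 : ℝ) * S.N ^ 2 * S.P ^ 2 / S.delta))

/-- The signal-learning hitting time `T₀`. -/
def T0 (C0 : ℝ) : ℕ :=
  sInf {t : ℕ | ∃ r, C0 / (S.alpha * (S.m : ℝ) ^ ((1 : ℝ) / 3)) < S.wsig t r}

/-- Maximum of the noise coefficients over unlearnable noise patches. -/
def rhoMaxSU (t : ℕ) : ℝ :=
  sSup {z : ℝ | ∃ r : Fin S.m, ∃ k ∈ S.SU, ∃ q, q ≠ S.sig k ∧ z = S.rho k q r t}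

/-- Shifted noise coefficients `ρ̂_{i,j,r}^{(t)}`. -/
def rhoHat (i : Fin S.N) (j : Fin S.P) (r : Fin S.m) (t : ℕ) : ℝ :=
  S.rho i j r t + S.y i * dot (S.w 0 r) (S.x i j) / sqnorm (S.x i j)

/-- Maximum shifted noise coefficient over unlearnable noise patches. -/
def rhoHatMax (t : ℕ) : ℝ :=
  sSup {z : ℝ | ∃ r : Fin S.m, ∃ k ∈ S.SU, ∃ q, q ≠ S.sig k ∧ z = S.rhoHat k q r t}

/-- The noise-memorization hitting time `T₁`. -/
def T1 (C1 : ℝ) : ℕ :=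
  sInf {t : ℕ | C1 / (((S.m : ℝ) * S.P) ^ ((1 : ℝ) / 3) * S.sigman ^ 2 * S.d) < S.rhoHatMax t}

/-- The Good-Teacher horizon `T_max`. -/
def Tmax : ℝ :=
  S.N / (1000 * S.eta * S.m * S.P * S.sigma0 ^ 4 * S.sigman ^ 6 * (S.d : ℝ) ^ 3 *
    Real.log ((16 : ℝ) * S.N * S.m * S.P / S.delta) ^ 2)

end Setting

section Dot

variable {d : ℕ}

lemma dot_comm (a b : Fin d → ℝ) : dot a b = dot b a := by
  simp only [dot, mul_comm]

lemma dot_add_left (a b c : Fin d → ℝ) : dot (a + b) c = dot a c + dot b c := by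
  simp only [dot, Pi.add_apply, add_mul, Finset.sum_add_distrib]

lemma dot_smul_left (s : ℝ) (a c : Fin d → ℝ) : dot (s • a) c = s * dot a c := by
  simp only [dot, Pi.smul_apply, smul_eq_mul, Finset.mul_sum, mul_assoc]

lemma dot_smul_right (s : ℝ) (a c : Fin d → ℝ) : dot a (s • c) = s * dot a c := by
  rw [dot_comm, dot_smul_left, dot_comm]

lemma dot_sum_left {ι : Type*} (s : Finset ι) (f : ι → Fin d → ℝ) (c : Fin d → ℝ) :
    dot (∑ i ∈ s, f i) c = ∑ i ∈ s, dot (f i) c := by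
  simp only [dot, Finset.sum_apply, Finset.sum_mul]
  exact Finset.sum_comm

lemma dot_e1_e1 (hd : 0 < d) : dot (e1 d hd) (e1 d hd) = 1 := by
  simp [dot, e1]

lemma dot_eLast_e1 (hd : 0 < d) (h2 : 2 ≤ d) : dot (eLast d hd) (e1 d hd) = 0 := by
  simp only [dot, e1, eLast]
  refine Finset.sum_eq_zero fun k _ => ?_
  by_cases h : k = (⟨0, hd⟩ : Fin d)
  · have : ¬ ((0 : ℕ) = d - 1) := by omega
    simp [h, this]
  · simp [h]

end Dot

lemma psi_pos (z : ℝ) : 0 < psi z := by unfold psi; positivity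

lemma psi_le_one (z : ℝ) : psi z ≤ 1 := by
  unfold psi
  rw [div_le_one (by positivity)]
  linarith [Real.exp_pos z]

lemma psi_le_exp_neg (z : ℝ) : psi z ≤ Real.exp (-z) := by
  rw [psi, Real.exp_neg, one_div]
  exact inv_anti₀ (Real.exp_pos z) (by linarith)

lemma phi_sub_phi_neg (z : ℝ) : phi z - phi (-z) = z ^ 3 := by
  unfold phi
  rcases le_total 0 z with h | h
  · rw [max_eq_right h, max_eq_left (by linarith)]; ring
  · rw [max_eq_left h, max_eq_right (by linarith)]; ring

namespace Setting

variable (S : Setting)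

lemma y_sq (i : Fin S.N) : S.y i * S.y i = 1 := by
  rcases S.hy i with h | h <;> rw [h] <;> norm_num

lemma abs_y (i : Fin S.N) : |S.y i| = 1 := by
  rcases S.hy i with h | h <;> rw [h] <;> norm_num

lemma mem_SL_or_mem_SU (i : Fin S.N) : i ∈ S.SL ∨ i ∈ S.SU := by
  rw [← Finset.mem_union, S.hunion]; exact Finset.mem_univ i

lemma xadv_sig (t : ℕ) (i : Fin S.N) :
    ∃ c : ℝ, S.xadv t i (S.sig i) = c • S.x i (S.sig i) := by
  obtain ⟨c, hc⟩ := S.hadvspan t i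
  refine ⟨c + 1, ?_⟩
  rw [add_smul, one_smul, ← hc, sub_add_cancel]

lemma dot_xadv_sig_noise (t : ℕ) (k i : Fin S.N) (j : Fin S.P) (hj : j ≠ S.sig i) :
    dot (S.xadv t k (S.sig k)) (S.x i j) = 0 := by
  obtain ⟨c, hc⟩ := S.xadv_sig t k
  rw [hc, dot_smul_left]
  rcases S.mem_SL_or_mem_SU k with h | h
  · rw [S.hsigL k h, dot_smul_left, dot_comm, S.hnoiseU i j hj]; ring
  · rw [S.hsigU k h, dot_smul_left, dot_comm, S.hnoiseV i j hj]; ring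

lemma marg_eq (t : ℕ) (i : Fin S.N) :
    S.marg t i = ∑ r, ∑ p, (S.y i * dot (S.w t r) (S.xadv t i p)) ^ 3 := by
  have hy3 : S.y i = S.y i ^ 3 := by
    rw [pow_succ, pow_two, S.y_sq, one_mul]
  simp only [marg, netOut, phi_sub_phi_neg, mul_pow]
  rw [← hy3]
  simp only [Finset.mul_sum]

lemma rho_nonneg (i : Fin S.N) (j : Fin S.P) (r : Fin S.m) (t : ℕ) : 0 ≤ S.rho i j r t := by
  induction t with
  | zero => simp [rho]
  | succ t ih =>
    have h1 := psi_pos (S.marg t i)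
    have h2 := S.heta
    rw [rho]
    positivity

/-- The inner product of a filter with a noise patch, decomposed along the noise coefficients. -/
lemma dot_w_noise (hdyn : S.ATDyn) (r : Fin S.m) (i : Fin S.N) (j : Fin S.P)
    (hj : j ≠ S.sig i) (t : ℕ) :
    dot (S.w t r) (S.x i j) = dot (S.w 0 r) (S.x i j) +
      ∑ k, ∑ q, if q = S.sig k then 0
        else S.y k * S.rho k q r t * dot (S.x k q) (S.x i j) := by
  induction t with
  | zero => simp [rho]
  | succ t ih =>
    rw [hdyn t r, dot_add_left, dot_smul_left, dot_sum_left, ih, add_assoc]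
    congr 1
    rw [Finset.mul_sum, ← Finset.sum_add_distrib]
    refine Finset.sum_congr rfl fun k _ => ?_
    rw [dot_smul_left, dot_sum_left, Finset.mul_sum, Finset.mul_sum, ← Finset.sum_add_distrib]
    refine Finset.sum_congr rfl fun q _ => ?_
    rw [dot_smul_left]
    by_cases hq : q = S.sig k
    · rw [if_pos hq, if_pos hq, hq, S.dot_xadv_sig_noise t k i j hj]; ring
    · rw [if_neg hq, if_neg hq, S.hadvnoise t k q hq, rho]; ring

lemma dot_xadv_e1_nonneg (hd2 : 2 ≤ S.d) (t : ℕ) (i : Fin S.N) (p : Fin S.P) :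
    0 ≤ S.y i * dot (S.xadv t i p) (e1 S.d S.hd) := by
  by_cases hp : p = S.sig i
  · subst hp
    rcases S.mem_SL_or_mem_SU i with h | h
    · linarith [(S.hadvlearn t i h).1, S.hepsalpha]
    · obtain ⟨c, hc⟩ := S.xadv_sig t i
      rw [hc, S.hsigU i h, dot_smul_left, dot_smul_left, dot_eLast_e1 S.hd hd2]
      simp
  · rw [S.hadvnoise t i p hp, S.hnoiseU i p hp, mul_zero]

/-- The signal coordinate of every filter is nondecreasing along the dynamics. -/
lemma dot_w_e1_ge (hdyn : S.ATDyn) (hd2 : 2 ≤ S.d) (r : Fin S.m) (t : ℕ) :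
    dot (S.w 0 r) (e1 S.d S.hd) ≤ dot (S.w t r) (e1 S.d S.hd) := by
  induction t with
  | zero => exact le_rfl
  | succ t ih =>
    refine ih.trans ?_
    rw [hdyn t r, dot_add_left, dot_smul_left, dot_sum_left]
    refine le_add_of_nonneg_right (mul_nonneg ?_ (Finset.sum_nonneg fun i _ => ?_))
    · have := S.heta; positivity
    · rw [dot_smul_left, dot_sum_left, Finset.mul_sum]
      refine Finset.sum_nonneg fun p _ => ?_
      rw [dot_smul_left]
      have h1 := S.dot_xadv_e1_nonneg hd2 t i p
      have h2 := psi_pos (S.marg t i)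
      calc 0 ≤ psi (S.marg t i) * (dot (S.w t r) (S.xadv t i p)) ^ 2 *
            (S.y i * dot (S.xadv t i p) (e1 S.d S.hd)) := by positivity
        _ = _ := by ring

/-- The signal patch of an adversarial example is never strongly misaligned with a filter. -/
lemma dot_w_xadv_sig_ge (hdyn : S.ATDyn) (hd2 : 2 ≤ S.d) {g : ℝ} (hg : 0 ≤ g)
    (h0 : ∀ r, -g ≤ dot (S.w 0 r) (e1 S.d S.hd)) (t : ℕ) (r : Fin S.m) (i : Fin S.N) :
    -(S.alpha * g) ≤ S.y i * dot (S.w t r) (S.xadv t i (S.sig i)) := by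
  have hα := S.halpha
  obtain ⟨c, hc⟩ := S.xadv_sig t i
  rcases S.mem_SL_or_mem_SU i with h | h
  · obtain ⟨h1, h2⟩ := S.hadvlearn t i h
    have hw : -g ≤ dot (S.w t r) (e1 S.d S.hd) := (h0 r).trans (S.dot_w_e1_ge hdyn hd2 r t)
    rw [hc, S.hsigL i h, dot_smul_left, dot_smul_left, dot_e1_e1] at h1 h2
    rw [hc, S.hsigL i h, dot_smul_right, dot_smul_right]
    set a := S.y i * (c * (S.alpha * S.y i * 1)) with ha
    have ha0 : 0 ≤ a := by linarith [S.hepsalpha]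
    calc -(S.alpha * g) ≤ a * (-g) := by nlinarith
      _ ≤ a * dot (S.w t r) (e1 S.d S.hd) := mul_le_mul_of_nonneg_left hw ha0
      _ = _ := by rw [ha]; ring
  · rw [hc, S.hsigU i h, dot_smul_right, dot_smul_right, S.hwperp]
    have : 0 ≤ S.alpha * g := by positivity
    simpa using this

/-- If all noise coefficients are at most `b`, a filter sees a noise patch only through its own
noise coefficient, up to the initialization and the cross-correlations. -/
lemma abs_dot_w_noise_sub_le (hdyn : S.ATDyn) {c b I : ℝ} (hc : 0 ≤ c) (hb : 0 ≤ b)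
    (hcross : ∀ i k j q, j ≠ S.sig i → q ≠ S.sig k →
      ((i, j) : Fin S.N × Fin S.P) ≠ (k, q) → |dot (S.x i j) (S.x k q)| ≤ c)
    (hinit : ∀ r i j, j ≠ S.sig i → |dot (S.w 0 r) (S.x i j)| ≤ I)
    (t : ℕ) (hrho : ∀ r i j, j ≠ S.sig i → S.rho i j r t ≤ b)
    (r : Fin S.m) (i : Fin S.N) (j : Fin S.P) (hj : j ≠ S.sig i) :
    |S.y i * dot (S.w t r) (S.x i j) - S.rho i j r t * sqnorm (S.x i j)| ≤
      I + S.N * S.P * (b * c) := by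
  set F : Fin S.N × Fin S.P → ℝ := fun kq => if kq.2 = S.sig kq.1 then 0
    else S.y kq.1 * S.rho kq.1 kq.2 r t * dot (S.x kq.1 kq.2) (S.x i j) with hF
  have hsum : dot (S.w t r) (S.x i j) = dot (S.w 0 r) (S.x i j) +
      (F (i, j) + ∑ kq ∈ Finset.univ.erase (i, j), F kq) := by
    rw [S.dot_w_noise hdyn r i j hj t, Finset.add_sum_erase _ _ (Finset.mem_univ _),
      Fintype.sum_prod_type]
  have hFij : F (i, j) = S.y i * S.rho i j r t * sqnorm (S.x i j) := by
    simp [hF, hj, sqnorm]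
  have hrest : |∑ kq ∈ Finset.univ.erase (i, j), F kq| ≤ S.N * S.P * (b * c) := by
    calc |∑ kq ∈ Finset.univ.erase (i, j), F kq|
        ≤ ∑ kq ∈ Finset.univ.erase (i, j), |F kq| := Finset.abs_sum_le_sum_abs _ _
      _ ≤ ∑ kq ∈ Finset.univ.erase (i, j), b * c := by
          refine Finset.sum_le_sum fun kq hkq => ?_
          have hne := Finset.ne_of_mem_erase hkq
          simp only [hF]
          split_ifs with h
          · rw [abs_zero]; positivity
          · rw [abs_mul, abs_mul, S.abs_y, one_mul, abs_of_nonneg (S.rho_nonneg _ _ _ _)]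
            exact mul_le_mul (hrho r _ _ h) (hcross _ _ _ _ h hj hne) (abs_nonneg _) hb
      _ ≤ ∑ _kq : Fin S.N × Fin S.P, b * c :=
          Finset.sum_le_sum_of_subset_of_nonneg (Finset.erase_subset _ _)
            fun _ _ _ => by positivity
      _ = S.N * S.P * (b * c) := by simp
  have key : S.y i * dot (S.w t r) (S.x i j) - S.rho i j r t * sqnorm (S.x i j) =
      S.y i * (dot (S.w 0 r) (S.x i j) + ∑ kq ∈ Finset.univ.erase (i, j), F kq) := by
    rw [hsum, hFij]
    linear_combination (S.rho i j r t * sqnorm (S.x i j)) * S.y_sq i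
  rw [key, abs_mul, S.abs_y, one_mul]
  exact (abs_add_le _ _).trans (add_le_add (hinit r i j hj) hrest)

/-- A single strongly memorized noise patch forces a large adversarial margin. -/
lemma marg_ge {e s : ℝ} (t : ℕ) (i : Fin S.N)
    (hs : ∀ r, -s ≤ S.y i * dot (S.w t r) (S.xadv t i (S.sig i)))
    (he : ∀ r j, j ≠ S.sig i → -e ≤ S.y i * dot (S.w t r) (S.x i j))
    (he0 : 0 ≤ e) (r : Fin S.m) (j : Fin S.P) (hj : j ≠ S.sig i) :
    (S.y i * dot (S.w t r) (S.x i j)) ^ 3 - (S.m * S.P * e ^ 3 + S.m * s ^ 3) ≤ S.marg t i := by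
  set G : Fin S.m × Fin S.P → ℝ := fun rp =>
    (S.y i * dot (S.w t rp.1) (S.xadv t i rp.2)) ^ 3 +
      (e ^ 3 + if rp.2 = S.sig i then s ^ 3 else 0) with hG
  have hcube : ∀ {a z : ℝ}, -a ≤ z → 0 ≤ z ^ 3 + a ^ 3 := fun {a z} h => by
    have : (-a) ^ 3 ≤ z ^ 3 := (Odd.strictMono_pow (R := ℝ) (n := 3) (by decide)).monotone h
    linarith [show (-a) ^ 3 = -a ^ 3 by ring]
  have hG0 : ∀ rp ∈ (Finset.univ : Finset (Fin S.m × Fin S.P)), 0 ≤ G rp := by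
    rintro ⟨r', p⟩ -
    simp only [hG]
    split_ifs with h
    · have h1 := hcube (hs r')
      have h2 : 0 ≤ e ^ 3 := by positivity
      rw [h]; linarith
    · rw [S.hadvnoise t i p h]
      linarith [hcube (he r' p h)]
  have hsingle := Finset.single_le_sum hG0 (Finset.mem_univ (r, j))
  have htotal : ∑ rp, G rp = S.marg t i + (S.m * S.P * e ^ 3 + S.m * s ^ 3) := by
    simp only [hG, Finset.sum_add_distrib, S.marg_eq, Fintype.sum_prod_type]
    simp [mul_assoc]
  have hGrj : G (r, j) = (S.y i * dot (S.w t r) (S.x i j)) ^ 3 + e ^ 3 := by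
    simp [hG, hj, S.hadvnoise t i j hj]
  have h2 : 0 ≤ e ^ 3 := by positivity
  linarith

/-- Noise coefficients stay below `10 λ / n` when `n` is the scale of the squared norms of the
noise patches and `λ ^ 3 = log T`. -/
lemma rho_le_of_scales (hdyn : S.ATDyn) (hd2 : 2 ≤ S.d) {n lam c I g : ℝ} (hn : 0 < n)
    (hlam : 1 ≤ lam) (hT : 0 < S.T) (hlamT : lam ^ 3 = Real.log S.T)
    (hnorm : ∀ i j, j ≠ S.sig i →
      n / 2 ≤ sqnorm (S.x i j) ∧ sqnorm (S.x i j) ≤ 3 * n / 2)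
    (hc : 0 ≤ c) (hcross : ∀ i k j q, j ≠ S.sig i → q ≠ S.sig k →
      ((i, j) : Fin S.N × Fin S.P) ≠ (k, q) → |dot (S.x i j) (S.x k q)| ≤ c)
    (hI : 0 ≤ I) (hinit : ∀ r i j, j ≠ S.sig i → |dot (S.w 0 r) (S.x i j)| ≤ I)
    (hg : 0 ≤ g) (hsignal : ∀ r, -g ≤ dot (S.w 0 r) (e1 S.d S.hd))
    {e : ℝ} (he : I + S.N * S.P * (10 * lam / n * c) ≤ e) (he' : e ≤ 1 / 2)
    (hme : S.m * S.P * e ^ 3 ≤ 1 / 2) (hmg : S.m * (S.alpha * g) ^ 3 ≤ 1 / 2)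
    (heta : 1536 * (S.eta * n * lam) ≤ 1) (t : ℕ) (ht : t ≤ S.T)
    (r : Fin S.m) (i : Fin S.N) (j : Fin S.P) (hj : j ≠ S.sig i) :
    S.rho i j r t ≤ 10 * lam / n := by
  have hTr : (0 : ℝ) < S.T := by exact_mod_cast hT
  have hN1 : (1 : ℝ) ≤ S.N := by exact_mod_cast S.hN
  have heta0 := S.heta
  have hα := S.halpha
  have hlam0 : 0 < lam := by linarith
  have hB : 0 < lam / n := by positivity
  have he0 : 0 ≤ e := le_trans (by positivity) he
  have hbase : ∀ s : ℕ, s ≤ S.T → (19 / 2 + s / (2 * S.T)) * (lam / n) ≤ 10 * lam / n := by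
    intro s hs
    have h1 : (s : ℝ) / (2 * S.T) ≤ 1 / 2 := by
      rw [div_le_iff₀ (by positivity)]
      have : (s : ℝ) ≤ S.T := by exact_mod_cast hs
      linarith
    calc (19 / 2 + s / (2 * S.T)) * (lam / n) ≤ 10 * (lam / n) := by gcongr; linarith
      _ = 10 * lam / n := by ring
  suffices h : ∀ s : ℕ, s ≤ S.T → ∀ (r : Fin S.m) (i : Fin S.N) (j : Fin S.P), j ≠ S.sig i →
      S.rho i j r s ≤ (19 / 2 + s / (2 * S.T)) * (lam / n) from
    (h t ht r i j hj).trans (hbase t ht)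
  clear ht hj
  intro s
  induction s with
  | zero =>
    intro _ r i j _
    simp only [rho]
    positivity
  | succ s ih =>
    intro hs r i j hj
    have hs' : s ≤ S.T := by omega
    have hdev : ∀ (r : Fin S.m) (i : Fin S.N) (j : Fin S.P), j ≠ S.sig i →
        |S.y i * dot (S.w s r) (S.x i j) - S.rho i j r s * sqnorm (S.x i j)| ≤ e :=
      fun r i j hj => (S.abs_dot_w_noise_sub_le hdyn hc (by positivity) hcross hinit s
        (fun r i j hj => (ih hs' r i j hj).trans (hbase s hs')) r i j hj).trans he
    have hlow : ∀ (r : Fin S.m) (i : Fin S.N) (j : Fin S.P), j ≠ S.sig i →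
        S.rho i j r s * (n / 2) - e ≤ S.y i * dot (S.w s r) (S.x i j) := by
      intro r i j hj
      have h1 := (abs_le.mp (hdev r i j hj)).1
      have h2 := mul_le_mul_of_nonneg_left (hnorm i j hj).1 (S.rho_nonneg i j r s)
      linarith
    have hrho10 := (ih hs' r i j hj).trans (hbase s hs')
    have hsq : (dot (S.w s r) (S.x i j)) ^ 2 ≤ (16 * lam) ^ 2 := by
      have h1 := (abs_le.mp (hdev r i j hj)).2
      have h2 : S.rho i j r s * sqnorm (S.x i j) ≤ 10 * lam / n * (3 * n / 2) :=
        mul_le_mul hrho10 (hnorm i j hj).2 (le_trans (by positivity) (hnorm i j hj).1)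
          (by positivity)
      have h3 : 10 * lam / n * (3 * n / 2) = 15 * lam := by field_simp; norm_num
      have h4 := hlow r i j hj
      have h5 : 0 ≤ S.rho i j r s * (n / 2) := mul_nonneg (S.rho_nonneg _ _ _ _) (by positivity)
      have h6 : (dot (S.w s r) (S.x i j)) ^ 2 = (S.y i * dot (S.w s r) (S.x i j)) ^ 2 := by
        rw [mul_pow, pow_two (S.y i), S.y_sq, one_mul]
      rw [h6]
      exact sq_le_sq' (by linarith) (by linarith)
    have hinc : 3 * S.eta / S.N * psi (S.marg s i) * (dot (S.w s r) (S.x i j)) ^ 2 ≤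
        psi (S.marg s i) * (lam / n / 2) := by
      have hp := psi_pos (S.marg s i)
      have h1 : 3 * S.eta / S.N ≤ 3 * S.eta := div_le_self (by positivity) hN1
      have h2 : 3 * S.eta * (16 * lam) ^ 2 ≤ lam / n / 2 := by
        rw [div_div, le_div_iff₀ (by positivity)]
        nlinarith
      calc 3 * S.eta / S.N * psi (S.marg s i) * (dot (S.w s r) (S.x i j)) ^ 2
          ≤ 3 * S.eta * psi (S.marg s i) * (16 * lam) ^ 2 := by gcongr
        _ = psi (S.marg s i) * (3 * S.eta * (16 * lam) ^ 2) := by ring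
        _ ≤ _ := by gcongr
    rw [rho]
    rcases le_or_gt (S.rho i j r s) (9 * (lam / n)) with hsmall | hlarge
    · have h1 : psi (S.marg s i) * (lam / n / 2) ≤ 1 * (lam / n / 2) := by
        gcongr; exact psi_le_one _
      have h2 : 0 ≤ ((s + 1 : ℕ) : ℝ) / (2 * S.T) * (lam / n) := by positivity
      linarith
    · have hz : 4 * lam ≤ S.y i * dot (S.w s r) (S.x i j) := by
        have h1 := hlow r i j hj
        have h2 : 9 * (lam / n) * (n / 2) ≤ S.rho i j r s * (n / 2) := by gcongr
        have h3 : 9 * (lam / n) * (n / 2) = 9 / 2 * lam := by field_simp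
        linarith
      have hcube : (4 * lam) ^ 3 ≤ (S.y i * dot (S.w s r) (S.x i j)) ^ 3 := by gcongr
      have hmarg := S.marg_ge (e := e) (s := S.alpha * g) s i
        (fun r => S.dot_w_xadv_sig_ge hdyn hd2 hg hsignal s r i)
        (fun r j hj => by
          have h1 := hlow r i j hj
          have h2 := mul_nonneg (S.rho_nonneg i j r s) (show 0 ≤ n / 2 by positivity)
          linarith)
        he0 r j hj
      have hlam3 : 1 ≤ lam ^ 3 := one_le_pow₀ hlam
      have hL : Real.log S.T ≤ S.marg s i := by
        rw [← hlamT]; linarith [show (4 * lam) ^ 3 = 64 * lam ^ 3 by ring]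
      have hpsi : psi (S.marg s i) ≤ 1 / S.T := by
        refine (psi_le_exp_neg _).trans ?_
        rw [one_div, ← Real.exp_log hTr, ← Real.exp_neg]
        exact Real.exp_le_exp.mpr (by linarith)
      have h1 : psi (S.marg s i) * (lam / n / 2) ≤ 1 / S.T * (lam / n / 2) := by gcongr
      have h2 := ih hs' r i j hj
      have h3 : (19 / 2 + ((s + 1 : ℕ) : ℝ) / (2 * S.T)) * (lam / n) =
          (19 / 2 + s / (2 * S.T)) * (lam / n) + 1 / S.T * (lam / n / 2) := by
        push_cast; field_simp; ring
      linarith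

set_option maxHeartbeats 1600000 in
/-- Up to universal factors, the hypotheses of `rho_le_of_scales` follow from the condition (H)
with any constant at least `10 ^ 12`. -/
theorem rho_le_of_condH {C : ℝ} (hC : 10 ^ 12 ≤ C) (hdyn : S.ATDyn) (hE : S.EventE)
    (hH : S.CondH C) (t : ℕ) (ht : t ≤ S.T) (r : Fin S.m) (i : Fin S.N) (j : Fin S.P)
    (hj : j ≠ S.sig i) :
    S.rho i j r t ≤ 10 * Real.log S.T ^ ((1 : ℝ) / 3) / (S.sigman ^ 2 * S.d) := by
  obtain ⟨hnorm, hcross, -, -, hsignal, hinit, -, -⟩ := hE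
  obtain ⟨-, hhor, hdim, -, hsig0, heta, -, -, -, -, hP2, hPC⟩ := hH
  have hC0 : 0 < C := by linarith
  have hN : (1 : ℝ) ≤ S.N := by exact_mod_cast S.hN
  have hM : (1 : ℝ) ≤ S.m := by exact_mod_cast S.hm
  have hP : (2 : ℝ) ≤ S.P := by exact_mod_cast hP2
  have hD : (1 : ℝ) ≤ S.d := by exact_mod_cast S.hd
  have hδ := S.hdelta0
  have hδ1 := S.hdelta1
  have hα := S.halpha
  have hσn := S.hsigman
  have hσ0 := S.hsigma0
  have hη := S.heta
  have hsD : 0 < Real.sqrt S.d := Real.sqrt_pos.mpr (by linarith)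
  have hsD2 : Real.sqrt S.d * Real.sqrt S.d = S.d := Real.mul_self_sqrt (by linarith)
  have hT0 : (0 : ℝ) < S.T := lt_of_lt_of_le (by positivity) hhor
  have hTnat : 0 < S.T := by exact_mod_cast hT0
  have hT1 : (1 : ℝ) ≤ S.T := by exact_mod_cast hTnat
  set X : ℝ := (S.T : ℝ) * S.N * S.m * S.P / S.delta with hX
  set Λ : ℝ := Real.log X with hΛ
  have hTX : (S.T : ℝ) * 2 ≤ X := by
    rw [hX, le_div_iff₀ hδ]
    calc (S.T : ℝ) * 2 * S.delta ≤ S.T * 2 * 1 := by gcongr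
      _ = S.T * 1 * 1 * 2 := by ring
      _ ≤ S.T * S.N * S.m * S.P := by gcongr
  have hX0 : 0 < X := by linarith
  have hΛhalf : 1 / 2 ≤ Λ := by
    have : Real.log 2 ≤ Λ := Real.log_le_log (by norm_num) (by linarith)
    linarith [Real.log_two_gt_d9]
  have hΛ0 : 0 < Λ := by linarith
  set Λ' : ℝ := Real.log ((S.T : ℝ) * S.d * S.N * S.m * S.P / S.delta) with hΛ'
  have hΛΛ' : Λ ≤ Λ' := by
    refine Real.log_le_log hX0 ?_
    rw [hX]
    gcongr
    exact le_mul_of_one_le_right hT0.le hD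
  have hΛ'0 : 0 < Λ' := by linarith
  set μ : ℝ := (S.m : ℝ) ^ ((2 : ℝ) / 3) with hμ
  set π : ℝ := (S.P : ℝ) ^ ((2 : ℝ) / 3) with hπ
  have hμ1 : 1 ≤ μ := Real.one_le_rpow hM (by norm_num)
  have hπ1 : 1 ≤ π := Real.one_le_rpow (by linarith) (by norm_num)
  have hμ3 : μ ^ 3 = (S.m : ℝ) ^ 2 := by
    rw [hμ, ← Real.rpow_natCast, ← Real.rpow_mul (by linarith), ← Real.rpow_natCast]; norm_num
  have hπ3 : π ^ 3 = (S.P : ℝ) ^ 2 := by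
    rw [hπ, ← Real.rpow_natCast, ← Real.rpow_mul (by linarith), ← Real.rpow_natCast]; norm_num
  have hclear : ∀ {s v a L : ℝ}, 0 < a → 0 < L → s ≤ C⁻¹ * v / L → v ≤ 1 / a →
      C * (s * a * L) ≤ 1 := by
    intro s v a L ha hL h1 h2
    have h3 : s ≤ C⁻¹ * (1 / a) / L := h1.trans (by gcongr)
    calc C * (s * a * L) ≤ C * (C⁻¹ * (1 / a) / L * a * L) := by gcongr
      _ = 1 := by field_simp
  have hσ0n : C * (S.sigma0 * (μ * π * S.sigman * Real.sqrt S.d) * Λ') ≤ 1 :=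
    hclear (by positivity) hΛ'0 hsig0 ((min_le_left _ _).trans (min_le_left _ _))
  have hσ0α : C * (S.sigma0 * (S.alpha * μ) * Λ') ≤ 1 :=
    hclear (by positivity) hΛ'0 hsig0 ((min_le_left _ _).trans (min_le_right _ _))
  have hηn : C * (S.eta * (S.sigman ^ 2 * S.d) * Λ) ≤ 1 :=
    hclear (by positivity) hΛ0 heta ((min_le_left _ _).trans (min_le_right _ _))
  -- the horizon is long
  have hT27 : (27 : ℝ) ≤ S.T := by
    rw [div_le_iff₀ (by positivity)] at hhor
    have h1 : C * (S.eta * (S.sigman ^ 2 * S.d)) ≤ 2 := by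
      have : C * (S.eta * (S.sigman ^ 2 * S.d)) * (1 / 2) ≤
          C * (S.eta * (S.sigman ^ 2 * S.d)) * Λ := by gcongr
      linarith
    have h2 : C * (S.sigma0 * (S.sigman * Real.sqrt S.d)) ≤ 2 := by
      have : C * (S.sigma0 * (1 * 1 * S.sigman * Real.sqrt S.d) * (1 / 2)) ≤
          C * (S.sigma0 * (μ * π * S.sigman * Real.sqrt S.d) * Λ') := by
        gcongr
        linarith
      linarith
    have h3 : C ^ 2 * (S.eta * S.sigma0 * S.sigman ^ 3 * (S.d * Real.sqrt S.d)) ≤ 2 * 2 := by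
      calc C ^ 2 * (S.eta * S.sigma0 * S.sigman ^ 3 * (S.d * Real.sqrt S.d)) =
          C * (S.eta * (S.sigman ^ 2 * S.d)) *
            (C * (S.sigma0 * (S.sigman * Real.sqrt S.d))) := by ring
        _ ≤ 2 * 2 := by gcongr
    have h4 : C ^ 2 * (C * S.N) ≤ S.T * (2 * 2) := by
      calc C ^ 2 * (C * S.N) ≤ C ^ 2 *
            (S.T * (S.eta * S.sigma0 * S.sigman ^ 3 * (S.d * Real.sqrt S.d))) := by gcongr
        _ = S.T * (C ^ 2 *
            (S.eta * S.sigma0 * S.sigman ^ 3 * (S.d * Real.sqrt S.d))) := by ring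
        _ ≤ _ := by gcongr
    have h5 : (10 ^ 12 : ℝ) ^ 2 * (10 ^ 12 * 1) ≤ C ^ 2 * (C * S.N) := by gcongr
    norm_num at h5
    linarith
  have hlogT : 1 ≤ Real.log S.T := by
    rw [Real.le_log_iff_exp_le hT0]
    linarith [Real.exp_one_lt_d9]
  have hlogTΛ : Real.log S.T ≤ Λ := Real.log_le_log hT0 (by linarith)
  have hΛ1 : 1 ≤ Λ := by linarith
  set lam : ℝ := Real.log S.T ^ ((1 : ℝ) / 3) with hlam
  have hlam1 : 1 ≤ lam := Real.one_le_rpow hlogT (by norm_num)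
  have hlam3 : lam ^ 3 = Real.log S.T := by
    rw [hlam, ← Real.rpow_natCast, ← Real.rpow_mul (by linarith)]; norm_num
  have hlamΛ : lam ≤ Λ := by
    have : lam ≤ lam ^ 3 := le_self_pow₀ hlam1 (by norm_num)
    linarith
  have hsqrt_le : ∀ {z : ℝ}, z ≤ 2 * Λ → Real.sqrt z ≤ 2 * Λ := by
    intro z hz
    rw [Real.sqrt_le_left (by linarith)]
    exact hz.trans (le_self_pow₀ (by linarith) two_ne_zero)
  -- the logarithmic factors of the concentration event
  have hlog1 : Real.log ((16 : ℝ) * S.N * S.m * S.P / S.delta) ≤ Λ := by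
    refine Real.log_le_log (by positivity) ?_
    rw [hX]; gcongr; linarith
  have hlog2 : Real.log ((16 : ℝ) * S.m / S.delta) ≤ Λ := by
    refine Real.log_le_log (by positivity) ?_
    rw [hX]
    refine div_le_div_of_nonneg_right ?_ hδ.le
    calc (16 : ℝ) * S.m = 16 * 1 * S.m * 1 := by ring
      _ ≤ S.T * S.N * S.m * S.P := by gcongr <;> linarith
  have hlog3 : Real.log ((16 : ℝ) * S.N ^ 2 * S.P ^ 2 / S.delta) ≤ 2 * Λ := by
    have h2 : 2 * Λ = Real.log (X ^ 2) := by rw [Real.log_pow, ← hΛ]; norm_num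
    rw [h2]
    refine Real.log_le_log (by positivity) ?_
    rw [hX, div_pow]
    have hδ2 : S.delta ^ 2 ≤ S.delta := pow_le_of_le_one hδ.le hδ1.le two_ne_zero
    calc (16 : ℝ) * S.N ^ 2 * S.P ^ 2 / S.delta
        = (4 * S.N * 1 * S.P) ^ 2 / S.delta := by ring
      _ ≤ (S.T * S.N * S.m * S.P) ^ 2 / S.delta ^ 2 := by gcongr; linarith
  -- the dimension
  have hsC : (10 ^ 6 : ℝ) ≤ Real.sqrt C := Real.le_sqrt_of_sq_le (by linarith)
  have hsC2 : Real.sqrt C ^ 2 = C := Real.sq_sqrt hC0.le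
  have hsqrtd : Real.sqrt C * (S.m * S.P * S.N * Λ ^ 2) ≤ Real.sqrt S.d := by
    refine Real.le_sqrt_of_sq_le (le_trans (le_of_eq ?_) hdim)
    rw [mul_pow, hsC2]; ring
  have hd2 : 2 ≤ S.d := by
    have h1 : C * 1 ^ 2 * 1 ^ 2 * 1 ^ 2 * 1 ^ 4 ≤
        C * S.m ^ 2 * S.P ^ 2 * S.N ^ 2 * Λ ^ 4 := by gcongr; linarith
    have : (2 : ℝ) ≤ S.d := by linarith
    exact_mod_cast this
  -- initialization, cross-correlation and signal terms
  set I : ℝ := 2 * S.sigma0 * S.sigman *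
    Real.sqrt ((S.d : ℝ) * Real.log ((16 : ℝ) * S.N * S.m * S.P / S.delta)) with hIdef
  set c : ℝ := 2 * S.sigman ^ 2 *
    Real.sqrt ((S.d : ℝ) * Real.log ((16 : ℝ) * S.N ^ 2 * S.P ^ 2 / S.delta)) with hcdef
  set g : ℝ := S.sigma0 * Real.sqrt (2 * Real.log ((16 : ℝ) * S.m / S.delta)) with hgdef
  have hI : I ≤ 4 / (C * μ * π) := by
    rw [le_div_iff₀ (by positivity), hIdef, Real.sqrt_mul (by linarith)]
    have h1 := hsqrt_le (hlog1.trans (by linarith : Λ ≤ 2 * Λ))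
    calc 2 * S.sigma0 * S.sigman * (Real.sqrt S.d *
          Real.sqrt (Real.log ((16 : ℝ) * S.N * S.m * S.P / S.delta))) * (C * μ * π)
        ≤ 2 * S.sigma0 * S.sigman * (Real.sqrt S.d * (2 * Λ')) * (C * μ * π) := by
          gcongr; linarith
      _ = 4 * (C * (S.sigma0 * (μ * π * S.sigman * Real.sqrt S.d) * Λ')) := by ring
      _ ≤ 4 := by linarith
  have hK : S.N * S.P * (10 * lam / (S.sigman ^ 2 * S.d) * c) ≤ 40 / (Real.sqrt C * S.m) := by
    have h1 := hsqrt_le hlog3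
    have h2 : c ≤ 2 * S.sigman ^ 2 * (Real.sqrt S.d * (2 * Λ)) := by
      rw [hcdef, Real.sqrt_mul (by linarith)]; gcongr
    calc S.N * S.P * (10 * lam / (S.sigman ^ 2 * S.d) * c)
        ≤ S.N * S.P * (10 * Λ / (S.sigman ^ 2 * S.d) *
            (2 * S.sigman ^ 2 * (Real.sqrt S.d * (2 * Λ)))) := by gcongr
      _ = 40 * (S.N * S.P * Λ ^ 2) / Real.sqrt S.d := by
          have hd0 : (S.d : ℝ) ≠ 0 := by linarith
          field_simp
          linear_combination 40 * hsD2
      _ ≤ 40 * (S.N * S.P * Λ ^ 2) / (Real.sqrt C * (S.m * S.P * S.N * Λ ^ 2)) := by gcongr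
      _ = 40 / (Real.sqrt C * S.m) := by field_simp
  have hg : S.alpha * g ≤ 2 / (C * μ) := by
    rw [le_div_iff₀ (by positivity), hgdef]
    have h1 := hsqrt_le (z := 2 * Real.log ((16 : ℝ) * S.m / S.delta)) (by linarith)
    calc S.alpha * (S.sigma0 * Real.sqrt (2 * Real.log ((16 : ℝ) * S.m / S.delta))) * (C * μ)
        ≤ S.alpha * (S.sigma0 * (2 * Λ')) * (C * μ) := by gcongr; linarith
      _ = 2 * (C * (S.sigma0 * (S.alpha * μ) * Λ')) := by ring
      _ ≤ 2 := by linarith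
  have hg0 : 0 ≤ g := by positivity
  have hIhalf : 4 / (C * μ * π) ≤ 1 / 4 := by
    rw [div_le_iff₀ (by positivity)]
    have : 10 ^ 12 * 1 * 1 ≤ C * μ * π := by gcongr
    linarith
  have hKhalf : 40 / (Real.sqrt C * S.m) ≤ 1 / 4 := by
    rw [div_le_iff₀ (by positivity)]
    have : 10 ^ 6 * 1 ≤ Real.sqrt C * S.m := by gcongr
    linarith
  have hcubeI : S.m * S.P * (4 / (C * μ * π)) ^ 3 ≤ 1 / 32 := by
    have h1 : S.m * S.P * (4 / (C * μ * π)) ^ 3 = 64 / (C ^ 3 * (S.m * S.P)) := by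
      rw [div_pow, mul_pow, mul_pow, hμ3, hπ3]; field_simp; norm_num
    have h2 : (10 ^ 12 : ℝ) ^ 3 * (1 * 1) ≤ C ^ 3 * (S.m * S.P) := by gcongr; linarith
    rw [h1, div_le_iff₀ (by positivity)]
    norm_num at h2
    linarith
  have hcubeK : S.m * S.P * (40 / (Real.sqrt C * S.m)) ^ 3 ≤ 1 / 15 := by
    calc S.m * S.P * (40 / (Real.sqrt C * S.m)) ^ 3
        ≤ S.m * Real.sqrt C ^ 2 * (40 / (Real.sqrt C * S.m)) ^ 3 := by rw [hsC2]; gcongr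
      _ = 64000 / (Real.sqrt C * S.m ^ 2) := by
          have : 0 < Real.sqrt C := by positivity
          field_simp; norm_num
      _ ≤ 64000 / (10 ^ 6 * 1 ^ 2) := by gcongr
      _ ≤ 1 / 15 := by norm_num
  have hcubeg : S.m * (S.alpha * g) ^ 3 ≤ 1 / 2 := by
    have h1 : S.m * (2 / (C * μ)) ^ 3 = 8 / (C ^ 3 * S.m) := by
      rw [div_pow, mul_pow, hμ3]; field_simp; norm_num
    have h2 : (10 ^ 12 : ℝ) ^ 3 * 1 ≤ C ^ 3 * S.m := by gcongr
    calc S.m * (S.alpha * g) ^ 3 ≤ S.m * (2 / (C * μ)) ^ 3 := by gcongr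
      _ ≤ 1 / 2 := by
        rw [h1, div_le_iff₀ (by positivity)]
        norm_num at h2
        linarith
  refine S.rho_le_of_scales hdyn hd2 (n := S.sigman ^ 2 * S.d) (c := c) (I := I) (g := g)
    (e := 4 / (C * μ * π) + 40 / (Real.sqrt C * S.m)) (by positivity) hlam1 hTnat hlam3
    (fun i j hj => ?_) (by positivity) hcross (by positivity) hinit hg0
    (fun r => (abs_le.mp (hsignal r)).1) (add_le_add hI hK) (by linarith) ?_ hcubeg ?_ t ht r i j hj
  · obtain ⟨h1, h2⟩ := hnorm i j hj
    exact ⟨h1, by linarith⟩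
  · have h1 := add_pow_le (show 0 ≤ 4 / (C * μ * π) by positivity)
      (show 0 ≤ 40 / (Real.sqrt C * S.m) by positivity) 3
    have h2 := mul_le_mul_of_nonneg_left h1 (show (0 : ℝ) ≤ S.m * S.P by positivity)
    refine h2.trans ?_
    rw [mul_left_comm, mul_add]
    norm_num only
    linarith
  · have h1 : S.eta * (S.sigman ^ 2 * S.d) * lam ≤ S.eta * (S.sigman ^ 2 * S.d) * Λ := by gcongr
    have h2 : 10 ^ 12 * (S.eta * (S.sigman ^ 2 * S.d) * Λ) ≤
        C * (S.eta * (S.sigman ^ 2 * S.d) * Λ) := by gcongr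
    have h3 : 0 < S.eta * (S.sigman ^ 2 * S.d) * Λ := by positivity
    linarith

end Setting

/-- Uniform noise coefficient bound. On the event `E`, under
Condition (H), all noise coefficients satisfy `ρ_{i,j,r}^{(t)} ≤ 10 (log T)^{1/3}/(σ_n² d)`
for all `t ≤ T`. -/
theorem stmt8 :
    ∃ C : ℝ, 0 < C ∧
      ∀ S : Setting, S.ATDyn → S.EventE → S.CondH C → (S.SU.Nonempty → S.SparseRegime C) →
        ∀ t, t ≤ S.T → ∀ (r : Fin S.m) (i : Fin S.N) (j : Fin S.P), j ≠ S.sig i →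
          S.rho i j r t ≤ 10 * Real.log S.T ^ ((1 : ℝ) / 3) / (S.sigman ^ 2 * S.d) := by
  exact ⟨10 ^ 12, by norm_num, fun S hdyn hE hH _ t ht r i j hj =>
    S.rho_le_of_condH le_rfl hdyn hE hH t ht r i j hj⟩

end AD

end
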